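/- Let L, M ∈ SL_n with annotations α and β respectively. Then the induced maps (L, α) and (M, β) on X_n^ℤ are equal if and only if either L = M and α = β, or L and M are both equal to Z_a for some letter a ∈ X_n. -/

import Mathlib

/-!
Write `F` for the map induced by `(L, α)`. Since `α` takes finitely many values, the output
words written while processing `x i`, `i ∈ ℤ`, occupy consecutive intervals which tile `ℤ`, and
from coordinate `i + α q` on, `F x` is the output of `q` on `x i, x (i + 1), …`, where `q` is the
state forced at time `i` (`inducedMap_eq_hmap`).

If `L` has no incomplete response and `x` forces `q` at time `0`, then `α q` is the first
coordinate of `F x` that is not determined by the negative part of `x` (`isLeast_annotation`).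
So `F` determines `α q`, and then, by varying the nonnegative part of `x`, the map `hmap L q`.
When two induced maps agree, the states of `L` and `M` forced by the same sequence are therefore
ω-equivalent with equal annotations (`forced_match`); all states are forced by some sequence and
distinct states are not ω-equivalent, so this matching is a bijection (`exists_equiv`).

Conversely, in the absence of incomplete response the length of `λ(a, q)` can be read off from
`hmap L q` (`isLeast_out`), so a bijection respecting ω-equivalence respects transitions, hence
forced states, and the induced maps agree (`inducedMap_eq_of_equiv`). A degenerate element `Z_x`
admitting an annotation has `|x| = 1` up to ω-equality and induces a constant map, whereas no
transducer without incomplete response does (`not_const`).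
-/

/-!
Common definitions: transducers over a finite alphabet, strong synchronization,
cores, ω-equivalence, minimal representatives, the monoids `M_n`, `SL_n`, `SO_n`,
the groups `O_n`, `L_n`, annotations, and the two-sided full shift.

Throughout, the alphabet is `Fin (n + 2)`, i.e. an alphabet of size `n + 2 ≥ 2`.
-/

namespace ShiftPaper

/-- The alphabet with `n + 2` letters. -/
abbrev A (n : ℕ) : Type := Fin (n + 2)

/-- Finite words over the alphabet. -/
abbrev Word (n : ℕ) : Type := List (A n)

/-- A transducer over the alphabet `A n`: a finite nonempty set of states together with a
transition function `tr` and an output function `out` (possibly asynchronous). -/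
structure Transducer (n : ℕ) where
  Q : Type
  fin : Finite Q
  ne : Nonempty Q
  tr : A n → Q → Q
  out : A n → Q → Word n

variable {n : ℕ}

instance (T : Transducer n) : Finite T.Q := T.fin
instance (T : Transducer n) : Nonempty T.Q := T.ne

/-- Extended transition function, reading a finite word from left to right. -/
def dsts (T : Transducer n) : Word n → T.Q → T.Q
  | [], q => q
  | a :: w, q => dsts T w (T.tr a q)

/-- Extended output function along a finite word. -/
def outs (T : Transducer n) : Word n → T.Q → Word n
  | [], _ => []
  | a :: w, q => T.out a q ++ outs T w (T.tr a q)

/-- Every (nonempty) circuit in the transducer has nonempty output. -/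
def CircuitsNonempty (T : Transducer n) : Prop :=
  ∀ (q : T.Q) (w : Word n), w ≠ [] → dsts T w q = q → outs T w q ≠ []

/-- `T` is synchronizing at level `k`: the state reached after reading any word of
length `k` does not depend on the starting state. -/
def SyncAt (T : Transducer n) (k : ℕ) : Prop :=
  ∀ w : Word n, w.length = k → ∀ p q : T.Q, dsts T w p = dsts T w q

/-- `T` is strongly synchronizing: synchronizing at some level. -/
def StronglySync (T : Transducer n) : Prop := ∃ k, SyncAt T k

/-- The minimal synchronizing level (junk value `0` if `T` is not strongly synchronizing). -/
noncomputable def syncLevel (T : Transducer n) : ℕ := by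
  classical
  exact if h : StronglySync T then Nat.find h else 0

/-- The infinite output stream produced from state `q` on reading the infinite input `x`
(the map `h_q`).  (Well defined on transducers all of whose circuits have nonempty
output; junk values otherwise.) -/
noncomputable def hmap (T : Transducer n) (q : T.Q) (x : ℕ → A n) : ℕ → A n := fun m => by
  classical
  exact if h : ∃ k, m < (outs T ((List.range k).map x) q).length then
    (outs T ((List.range h.choose).map x) q).getD m default
  else default

/-- ω-equality of transducers: a bijection of the state sets under which corresponding
states induce the same maps on infinite sequences. -/
def OmegaEq (T U : Transducer n) : Prop :=
  ∃ f : T.Q ≃ U.Q, ∀ q, hmap T q = hmap U (f q)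

/-- The setoid on states given by ω-equivalence of states. -/
def omegaSetoid (T : Transducer n) : Setoid T.Q :=
  ⟨fun p q => hmap T p = hmap T q, ⟨fun _ => rfl, fun h => h.symm, fun h h' => h.trans h'⟩⟩

/-- The transducer obtained by identifying ω-equivalent states. -/
noncomputable def quotT (T : Transducer n) : Transducer n where
  Q := Quotient (omegaSetoid T)
  fin := Finite.of_surjective (Quotient.mk (omegaSetoid T))
    fun c => ⟨Quotient.out c, Quotient.out_eq c⟩
  ne := ⟨Quotient.mk (omegaSetoid T) (Classical.choice T.ne)⟩
  tr := fun a c => Quotient.mk (omegaSetoid T) (T.tr a (Quotient.out c))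
  out := fun a c => T.out a (Quotient.out c)

/-- `q` is a state of the core of `T`: it is forced by some word whose length is a
synchronizing level of `T`. -/
def CoreState (T : Transducer n) (q : T.Q) : Prop :=
  ∃ (k : ℕ) (w : Word n), SyncAt T k ∧ w.length = k ∧ ∀ p, dsts T w p = q

/-- `T` is core: it equals its core. -/
def IsCore (T : Transducer n) : Prop := ∀ q : T.Q, CoreState T q

/-- Auxiliary predicate used to make the core construction total. -/
def CoreStateE (T : Transducer n) (q : T.Q) : Prop :=
  CoreState T q ∨ ∀ p, ¬ CoreState T p

/-- The core of `T` (as a transducer). -/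
noncomputable def coreT (T : Transducer n) : Transducer n where
  Q := {q : T.Q // CoreStateE T q}
  fin := Subtype.finite
  ne := by
    classical
    by_cases h : ∀ p, ¬ CoreState T p
    · exact ⟨⟨Classical.choice T.ne, Or.inr h⟩⟩
    · push_neg at h
      obtain ⟨p, hp⟩ := h
      exact ⟨⟨p, Or.inl hp⟩⟩
  tr := fun a q => by
    classical
    exact if h : CoreStateE T (T.tr a q.1) then ⟨T.tr a q.1, h⟩ else q
  out := fun a q => T.out a q.1

/-- There exist two inputs whose outputs from `q` disagree at position `j`. -/
def Disagree (T : Transducer n) (q : T.Q) (j : ℕ) : Prop :=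
  ∃ x y : ℕ → A n, hmap T q x j ≠ hmap T q y j

/-- The extent of incomplete response of `q` (the length of `Λ(ε,q)`) is finite. -/
def FiniteExtent (T : Transducer n) (q : T.Q) : Prop := ∃ j, Disagree T q j

/-- The extent of incomplete response `|Λ(ε,q)|` of the state `q`
(junk value `0` when it is infinite). -/
noncomputable def extentLen (T : Transducer n) (q : T.Q) : ℕ := by
  classical
  exact if h : FiniteExtent T q then Nat.find h else 0

/-- The word `Λ(ε,q)`: the greatest common prefix of all outputs from `q`. -/
noncomputable def extentWord (T : Transducer n) (q : T.Q) : Word n :=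
  (List.range (extentLen T q)).map (hmap T q fun _ => default)

/-- `T` has no states of incomplete response (`Λ(ε,q) = ε` for every state `q`). -/
def NoIncomplete (T : Transducer n) : Prop := ∀ q : T.Q, Disagree T q 0

/-- No two distinct states of `T` are ω-equivalent. -/
def WeaklyMinimal (T : Transducer n) : Prop :=
  ∀ p q : T.Q, hmap T p = hmap T q → p = q

/-- The Lipschitz condition (SL3): around any circuit the output is as long as the input. -/
def SL3 (T : Transducer n) : Prop :=
  ∀ (q : T.Q) (Γ : Word n), dsts T Γ q = q → (outs T Γ q).length = Γ.length

/-- `T` is synchronous: it writes exactly one letter for each letter read. -/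
def Synchronous (T : Transducer n) : Prop :=
  ∀ (a : A n) (q : T.Q), (T.out a q).length = 1

/-- Boolean lexicographic comparison of words. -/
def lexLtB : Word n → Word n → Bool
  | [], [] => false
  | [], _ :: _ => true
  | _ :: _, [] => false
  | a :: u, b :: v => if a < b then true else if b < a then false else lexLtB u v

/-- The lexicographically least rotation of a word. -/
def minimalRot (w : Word n) : Word n :=
  ((List.range w.length).map fun i => w.rotate i).foldl
    (fun acc r => if lexLtB r acc then r else acc) w

/-- A nonempty word is prime if it is not a power of a strictly shorter word. -/
def IsPrime (w : Word n) : Prop :=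
  w ≠ [] ∧ ∀ (u : Word n) (k : ℕ), w = (List.replicate k u).flatten → w.length ≤ u.length

/-- `v` is a rotation of `u`. -/
def RotEq (u v : Word n) : Prop := ∃ i : ℕ, v = u.rotate i

/-- The prime word of which the (eventually constant single) image point of `T` is a power
(used for the degenerate transducers `Z_x`; junk values otherwise). -/
noncomputable def periodicRoot (T : Transducer n) : Word n := by
  classical
  exact
    if hp : ∃ m, 0 < m ∧ ∀ j, hmap T (Classical.choice T.ne) (fun _ => default) (j + m) =
        hmap T (Classical.choice T.ne) (fun _ => default) j
    then (List.range (Nat.find hp)).map (hmap T (Classical.choice T.ne) fun _ => default)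
    else [default]

/-- Remove the incomplete response from the states of `T`: replace the output `λ(a,q)` by
`Λ(a,q) - Λ(ε,q)`.  (In the degenerate case where the extents of incomplete response are
infinite, all outputs are replaced by the minimal rotation of the prime root of the unique
image point, so that minimising produces the transducer `Z_x` of the paper.) -/
noncomputable def removeIncomplete (T : Transducer n) : Transducer n where
  Q := T.Q
  fin := T.fin
  ne := T.ne
  tr := T.tr
  out := fun a q => by
    classical
    exact if ∀ p : T.Q, FiniteExtent T p then
      (T.out a q ++ extentWord T (T.tr a q)).drop (extentLen T q)
    else minimalRot (periodicRoot T)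

/-- The minimal representative `[T]` of a strongly synchronizing core transducer `T`:
remove incomplete response, take the core, and identify ω-equivalent states. -/
noncomputable def minRep (T : Transducer n) : Transducer n :=
  quotT (coreT (removeIncomplete T))

/-- The single state transducer `Z_x` which outputs `x` on every input letter. -/
def Zword (x : Word n) : Transducer n where
  Q := PUnit
  fin := inferInstance
  ne := ⟨PUnit.unit⟩
  tr := fun _ q => q
  out := fun _ _ => x

/-- The single state identity transducer. -/
def oneT : Transducer n where
  Q := PUnit
  fin := inferInstance
  ne := ⟨PUnit.unit⟩
  tr := fun _ q => q
  out := fun a _ => [a]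

/-- The product transducer `T * U`: the outputs of `T` are processed by `U`. -/
noncomputable def prodT (T U : Transducer n) : Transducer n where
  Q := T.Q × U.Q
  fin := inferInstance
  ne := ⟨⟨Classical.choice T.ne, Classical.choice U.ne⟩⟩
  tr := fun a p => (T.tr a p.1, dsts U (T.out a p.1) p.2)
  out := fun a p => outs U (T.out a p.1) p.2

/-- The product in `M_n`: the minimal representative of the core of `T * U`. -/
noncomputable def mulT (T U : Transducer n) : Transducer n :=
  minRep (coreT (prodT T U))

/-- Membership in the monoid `M_n` of minimal, strongly synchronizing, core transducers
(a transducer is minimal if it is core, has no states of incomplete response and no two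
distinct ω-equivalent states, or it is one of the degenerate transducers `Z_x` for a prime
word `x` which is least in its rotation class). -/
def MnMem (T : Transducer n) : Prop :=
  CircuitsNonempty T ∧ StronglySync T ∧ IsCore T ∧
    ((NoIncomplete T ∧ WeaklyMinimal T) ∨
      ∃ x : Word n, IsPrime x ∧ minimalRot x = x ∧ OmegaEq T (Zword x))

/-- Membership in the monoid `SL_n`: elements of `M_n` satisfying the Lipschitz condition. -/
def SLnMem (T : Transducer n) : Prop := MnMem T ∧ SL3 T

/-- Membership in the monoid `SO_n`: elements of `M_n` all of whose states induce injective
maps with clopen image. -/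
def SOnMem (T : Transducer n) : Prop :=
  MnMem T ∧ ∀ q : T.Q, Function.Injective (hmap T q) ∧ IsClopen (Set.range (hmap T q))

/-- Membership in the group `O_n`: invertible elements of `SO_n` (with inverse in `SO_n`);
equality in `M_n` is ω-equality. -/
def OnMem (T : Transducer n) : Prop :=
  SOnMem T ∧ ∃ U : Transducer n, SOnMem U ∧ OmegaEq (mulT T U) oneT ∧ OmegaEq (mulT U T) oneT

/-- Membership in the group `L_n = O_n ∩ SL_n`. -/
def LnMem (T : Transducer n) : Prop := OnMem T ∧ SL3 T

/-- Membership in the monoid `\widetilde{P}_n` of weakly minimal, synchronous, strongly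
synchronizing core transducers. -/
def PtildeMem (T : Transducer n) : Prop :=
  CircuitsNonempty T ∧ StronglySync T ∧ IsCore T ∧ Synchronous T ∧ WeaklyMinimal T

/-- The product in `\widetilde{P}_n`: take the product transducer, identify ω-equivalent
states and take the core. -/
noncomputable def ptildeMul (P R : Transducer n) : Transducer n :=
  coreT (quotT (prodT P R))

/-- An annotation of (a strongly synchronizing core transducer satisfying the Lipschitz
condition) `T`. -/
def Annotation (T : Transducer n) (α : T.Q → ℤ) : Prop :=
  ∀ (q : T.Q) (Γ : Word n),
    α (dsts T Γ q) = α q + ((outs T Γ q).length : ℤ) - (Γ.length : ℤ)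

/-! ### The two-sided full shift -/

/-- The space of bi-infinite sequences over the alphabet `A n`. -/
abbrev FullShift (n : ℕ) : Type := ℤ → A n

/-- The `i`-th power of the shift map: `(shiftZ i x) j = x (j - i)`.
The shift `σ` itself is `shiftZ 1`. -/
def shiftZ (i : ℤ) (x : FullShift n) : FullShift n := fun j => x (j - i)

/-- The monoid of endomorphisms of the shift dynamical system: continuous maps on the
space of bi-infinite sequences commuting with the shift. -/
def EndShift (n : ℕ) : Type :=
  {f : FullShift n → FullShift n // Continuous f ∧ ∀ x, f (shiftZ 1 x) = shiftZ 1 (f x)}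

/-- The group of automorphisms of the shift dynamical system: homeomorphisms of the
space of bi-infinite sequences commuting with the shift. -/
def AutShift (n : ℕ) : Type :=
  {f : FullShift n → FullShift n // Continuous f ∧ (∀ x, f (shiftZ 1 x) = shiftZ 1 (f x)) ∧
    ∃ g : FullShift n → FullShift n, Continuous g ∧ (∀ x, g (f x) = x) ∧ ∀ x, f (g x) = x}

/-- The window `x_{i-k} … x_{i-1}` of a bi-infinite sequence. -/
def window (x : FullShift n) (i : ℤ) (k : ℕ) : Word n :=
  (List.range k).map fun j => x (i - (k : ℤ) + (j : ℤ))

/-- The state of `L` forced by the window `x_{i-k} … x_{i-1}`. -/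
noncomputable def forced (L : Transducer n) (k : ℕ) (x : FullShift n) (i : ℤ) : L.Q :=
  dsts L (window x i k) (Classical.choice L.ne)

/-- The output word written while processing the letter `x i`. -/
noncomputable def outAt (L : Transducer n) (k : ℕ) (x : FullShift n) (i : ℤ) : Word n :=
  L.out (x i) (forced L k x i)

/-- The defining specification of the map `(L, α) : X_n^ℤ → X_n^ℤ` induced by an annotated
transducer: for each index `i`, with `q` the state forced by `x_{i-k} … x_{i-1}` and
`w = λ(x_i, q)`, the word `w` occupies the coordinates `i + α q, …, i + α q + |w| - 1`
of the image sequence `y`. -/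
def SpecAt (L : Transducer n) (α : L.Q → ℤ) (k : ℕ) (x y : FullShift n) : Prop :=
  ∀ (i : ℤ) (j : ℕ), j < (outAt L k x i).length →
    y (i + α (forced L k x i) + (j : ℤ)) = (outAt L k x i).getD j default

/-- The map `(L, α) : X_n^ℤ → X_n^ℤ` induced by an annotated transducer. -/
noncomputable def inducedMap (L : Transducer n) (α : L.Q → ℤ) (k : ℕ) :
    FullShift n → FullShift n := fun x m => by
  classical
  exact if h : ∃ p : ℤ × ℕ, p.2 < (outAt L k x p.1).length ∧
      p.1 + α (forced L k x p.1) + (p.2 : ℤ) = m then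
    (outAt L k x h.choose.1).getD h.choose.2 default
  else default

/-- The map `κ` from the states of `T` to the states of its minimal representative. -/
noncomputable def kappa (T : Transducer n) (q : T.Q) : (minRep T).Q := by
  classical
  exact Quotient.mk (omegaSetoid (coreT (removeIncomplete T)))
    (if h : CoreStateE (removeIncomplete T) q then
      (⟨q, h⟩ : (coreT (removeIncomplete T)).Q)
    else Classical.choice (coreT (removeIncomplete T)).ne)

/-- The annotation `\overline{α + β}` of the product `LM` in `SL_n`: its value at the
state `κ (s, t)` is `α s + β t + |Λ(ε, (s,t))|`, the extent of incomplete response being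
computed in `core (L * M)`. -/
noncomputable def annProd (L M : Transducer n) (α : L.Q → ℤ) (β : M.Q → ℤ) :
    (mulT L M).Q → ℤ := fun c =>
  α (Quotient.out c).1.1.1 + β (Quotient.out c).1.1.2 +
    (extentLen (coreT (prodT L M)) (Quotient.out c).1 : ℤ)

/-- The set `ASL_n` of annotated transducers: pairs of a transducer and an integer-valued
function on its states. -/
def ASLPair (n : ℕ) := Σ T : Transducer n, T.Q → ℤ

/-- Membership in `ASL_n`: either the transducer is in `SL_n` with no states of incomplete
response and the function is an annotation of it, or it is a degenerate `Z_a` for a letter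
`a` (whose `annotation ∞` we model by allowing an arbitrary function). -/
def ASLMem (p : ASLPair n) : Prop :=
  (SLnMem p.1 ∧ NoIncomplete p.1 ∧ Annotation p.1 p.2) ∨ ∃ a : A n, OmegaEq p.1 (Zword [a])

/-- Equality in `ASL_n`: ω-equality of the transducers matching up the annotations, with
the two elements possibly both being the degenerate `(Z_a, ∞)` for the same letter `a`. -/
def ASLEq (p q : ASLPair n) : Prop :=
  (∃ f : p.1.Q ≃ q.1.Q, (∀ s, hmap p.1 s = hmap q.1 (f s)) ∧ ∀ s, q.2 (f s) = p.2 s) ∨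
    ∃ a : A n, OmegaEq p.1 (Zword [a]) ∧ OmegaEq q.1 (Zword [a])

/-- The product on `ASL_n`: `(L, α)(M, β) = (LM, \overline{α + β})`. -/
noncomputable def ASLmul (p q : ASLPair n) : ASLPair n :=
  ⟨mulT p.1 q.1, annProd p.1 q.1 p.2 q.2⟩

/-- The identity `(1, 0)` of `ASL_n`. -/
def ASLone : ASLPair n := ⟨oneT, fun _ => 0⟩

/-- Membership in `AL_n`: annotated elements of `L_n`. -/
def ALMem (p : ASLPair n) : Prop := LnMem p.1 ∧ Annotation p.1 p.2

/-- The element `([P], α)` of `ASL_n` with `α ((q) κ) = i + |Λ(ε, q)|`, associated to the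
endomorphism `σ^i ∘ f_P`. -/
noncomputable def phiPair (P : Transducer n) (i : ℤ) : ASLPair n :=
  ⟨minRep P, fun c => i + (extentLen P (Quotient.out c).1 : ℤ)⟩

/-- The unique state at the base of a circuit labelled `Γ` (junk value if there is none). -/
noncomputable def qcirc (T : Transducer n) (Γ : Word n) : T.Q := by
  classical
  exact if h : ∃ q, dsts T Γ q = q then h.choose else Classical.choice T.ne

/-- The prime root of a word: the prime word of which `w` is a power
(junk value `w` if there is none). -/
noncomputable def primeRoot (w : Word n) : Word n := by
  classical
  exact if h : ∃ u : Word n, IsPrime u ∧ ∃ k, w = (List.replicate k u).flatten then h.choose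
  else w

/-- The action of `T ∈ M_n` on (rotation classes of) prime words: `Γ` is sent to the prime
word of which `λ(Γ, q_Γ)` is a power, where `q_Γ` is the unique state with a circuit
labelled `Γ` based at it. -/
noncomputable def PiAct (T : Transducer n) (Γ : Word n) : Word n :=
  primeRoot (outs T Γ (qcirc T Γ))

/-- The cylinder set of one-sided infinite sequences with prefix `ν`. -/
def Cyl (ν : Word n) : Set (ℕ → A n) :=
  {x | ∀ (j : ℕ) (h : j < ν.length), x j = ν.get ⟨j, h⟩}

/-- `m_q = |B(q)|`: the least cardinality of a finite set of words whose cylinders are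
contained in, and together cover, the image of `h_q`. -/
noncomputable def mq (T : Transducer n) (q : T.Q) : ℕ :=
  sInf {m : ℕ | ∃ S : Finset (Word n), S.card = m ∧
    (∀ ν ∈ S, Cyl ν ⊆ Set.range (hmap T q)) ∧
    (⋃ ν ∈ S, Cyl ν) = Set.range (hmap T q)}

/-- The signature homomorphism `sig : O_n → (ℤ/(n-1))^×`, as an element of `ℤ/(n-1)`
(for our alphabet of size `n + 2`, the modulus is `n + 1`). -/
noncomputable def sigT (T : Transducer n) : ZMod (n + 1) :=
  (mq T (Classical.choice T.ne) : ZMod (n + 1))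


/-! ### Outputs on infinite inputs -/

/-- The infinite input with first letter `a` followed by `y`. -/
def scons (a : A n) (y : ℕ → A n) : ℕ → A n
  | 0 => a
  | m + 1 => y m

theorem map_range_scons (a : A n) (y : ℕ → A n) (r : ℕ) :
    (List.range (r + 1)).map (scons a y) = a :: (List.range r).map y := by
  rw [List.range_succ_eq_map]
  simp [scons, Function.comp_def]

theorem scons_eta (y : ℕ → A n) : scons (y 0) (fun j => y (j + 1)) = y := by
  funext j; cases j <;> rfl

theorem dsts_append (T : Transducer n) (u v : Word n) (q : T.Q) :
    dsts T (u ++ v) q = dsts T v (dsts T u q) := by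
  induction u generalizing q with
  | nil => rfl
  | cons a u ih => exact ih _

theorem outs_append (T : Transducer n) (u v : Word n) (q : T.Q) :
    outs T (u ++ v) q = outs T u q ++ outs T v (dsts T u q) := by
  induction u generalizing q with
  | nil => rfl
  | cons a u ih => simp [outs, dsts, ih]

theorem outs_range_prefix (T : Transducer n) (x : ℕ → A n) (q : T.Q) {r s : ℕ} (h : r ≤ s) :
    outs T ((List.range r).map x) q <+: outs T ((List.range s).map x) q := by
  obtain ⟨d, rfl⟩ := Nat.exists_eq_add_of_le h
  rw [List.range_add, List.map_append, outs_append]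
  exact List.prefix_append _ _

theorem getD_of_prefix {u v : Word n} (h : u <+: v) {m : ℕ} (hm : m < u.length) :
    u.getD m default = v.getD m default := by
  obtain ⟨t, rfl⟩ := h
  rw [List.getD_append _ _ _ _ hm]

/-- The value of `hmap` does not depend on the finite prefix chosen to compute it. -/
theorem hmap_eq (T : Transducer n) (q : T.Q) (x : ℕ → A n) {m r : ℕ}
    (hr : m < (outs T ((List.range r).map x) q).length) :
    hmap T q x m = (outs T ((List.range r).map x) q).getD m default := by
  have h : ∃ k, m < (outs T ((List.range k).map x) q).length := ⟨r, hr⟩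
  unfold hmap
  rw [dif_pos h]
  rcases le_total h.choose r with hle | hle
  · exact getD_of_prefix (outs_range_prefix T x q hle) h.choose_spec
  · exact (getD_of_prefix (outs_range_prefix T x q hle) hr).symm

theorem exists_bound (T : Transducer n) (α : T.Q → ℤ) : ∃ B : ℕ, ∀ q, |α q| ≤ B := by
  obtain ⟨b, hb⟩ := (Set.finite_range fun q => |α q|).bddAbove
  exact ⟨b.toNat, fun q => (hb ⟨q, rfl⟩).trans (Int.self_le_toNat b)⟩

/-- An annotated transducer writes arbitrarily long outputs: an annotation takes finitely
many values, so output length and input length differ by a bounded amount. -/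
theorem exists_long {T : Transducer n} {α : T.Q → ℤ} (hα : Annotation T α) (q : T.Q)
    (x : ℕ → A n) (m : ℕ) : ∃ r, m < (outs T ((List.range r).map x) q).length := by
  obtain ⟨B, hB⟩ := exists_bound T α
  refine ⟨m + 1 + 2 * B, ?_⟩
  have h := hα q ((List.range (m + 1 + 2 * B)).map x)
  have h1 := abs_le.1 (hB q)
  have h2 := abs_le.1 (hB (dsts T ((List.range (m + 1 + 2 * B)).map x) q))
  simp only [List.length_map, List.length_range] at h
  push_cast at h
  omega

theorem hmap_scons_lt {T : Transducer n} (q : T.Q)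
    (a : A n) (y : ℕ → A n) {m : ℕ} (hm : m < (T.out a q).length) :
    hmap T q (scons a y) m = (T.out a q).getD m default := by
  have e : outs T ((List.range 1).map (scons a y)) q = T.out a q := by
    simp [outs, scons]
  rw [hmap_eq T q (scons a y) (r := 1) (by rw [e]; exact hm), e]

theorem hmap_scons_ge {T : Transducer n} {α : T.Q → ℤ} (hα : Annotation T α) (q : T.Q)
    (a : A n) (y : ℕ → A n) (m : ℕ) :
    hmap T q (scons a y) ((T.out a q).length + m) = hmap T (T.tr a q) y m := by
  obtain ⟨r, hr⟩ := exists_long hα (T.tr a q) y m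
  have e : outs T ((List.range (r + 1)).map (scons a y)) q =
      T.out a q ++ outs T ((List.range r).map y) (T.tr a q) := by
    rw [map_range_scons]; rfl
  rw [hmap_eq T _ y hr, hmap_eq T q (scons a y) (r := r + 1) (by rw [e]; simpa using hr), e,
    List.getD_append_right _ _ _ _ (by omega)]
  simp

/-! ### Forced states -/

/-- `window` is elaborated with `List.range k` coerced to a list of integers; this is the same
list with the coercion applied inside the mapped function. -/
theorem window_eq (x : FullShift n) (i : ℤ) (k : ℕ) :
    window x i k = (List.range k).map fun j : ℕ => x (i - k + (j : ℤ)) := by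
  simp [window, List.map_eq_flatMap, List.flatMap_assoc]

theorem length_window (x : FullShift n) (i : ℤ) (k : ℕ) : (window x i k).length = k := by
  simp [window_eq]

theorem forced_dsts (L : Transducer n) {k : ℕ} (hk : SyncAt L k) (x : FullShift n) (i : ℤ)
    (q : L.Q) : dsts L (window x i k) q = forced L k x i :=
  hk _ (length_window x i k) _ _

theorem window_succ (x : FullShift n) (i : ℤ) (r : ℕ) :
    window x (i + 1) (r + 1) = window x i r ++ [x i] := by
  rw [window_eq, window_eq, List.range_succ, List.map_append]
  congr 1
  · refine List.map_congr_left fun j _ => ?_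
    congr 1; push_cast; ring
  · simp

theorem window_succ_left (x : FullShift n) (i : ℤ) (r : ℕ) :
    window x i (r + 1) = x (i - (r + 1)) :: window x i r := by
  rw [window_eq, window_eq, List.range_succ_eq_map, List.map_cons, List.map_map]
  congr 1
  · simp
  · refine List.map_congr_left fun j _ => ?_
    simp only [Function.comp]
    congr 1; push_cast; ring

theorem forced_succ (L : Transducer n) {k : ℕ} (hk : SyncAt L k) (x : FullShift n) (i : ℤ) :
    forced L k x (i + 1) = L.tr (x i) (forced L k x i) := by
  have h : dsts L (window x (i + 1) (k + 1)) (Classical.choice L.ne) =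
      L.tr (x i) (forced L k x i) := by
    rw [window_succ, dsts_append]; rfl
  rw [← h, window_succ_left]
  exact (forced_dsts L hk x (i + 1) _).symm

theorem dsts_window_forced (L : Transducer n) {k : ℕ} (hk : SyncAt L k) (x : FullShift n)
    (i : ℤ) (r : ℕ) : dsts L (window x (i + r) r) (forced L k x i) = forced L k x (i + r) := by
  induction r with
  | zero => simp [window, dsts]
  | succ r ih =>
    have e : i + ((r + 1 : ℕ) : ℤ) = i + r + 1 := by push_cast; ring
    rw [e, window_succ, dsts_append, ih, forced_succ L hk]
    rfl

theorem forced_congr (L : Transducer n) (k : ℕ) {x x' : FullShift n} {i : ℤ}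
    (h : ∀ j < i, x j = x' j) : forced L k x i = forced L k x' i := by
  unfold forced
  rw [window_eq, window_eq]
  congr 1
  refine List.map_congr_left fun j hj => h _ ?_
  have := List.mem_range.1 hj
  omega

/-- In a core transducer every state is forced at time `0` by some bi-infinite sequence. -/
theorem exists_forced (L : Transducer n) (hc : IsCore L) {k : ℕ} (hk : SyncAt L k) (q : L.Q) :
    ∃ x, forced L k x 0 = q := by
  obtain ⟨r, w, -, hw, hq⟩ := hc q
  refine ⟨fun j => w.getD (j + r).toNat default, ?_⟩
  set x : FullShift n := fun j => w.getD (j + r).toNat default with hx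
  have h := dsts_window_forced L hk x (-r) r
  have e : window x (-(r : ℤ) + r) r = w := by
    refine List.ext_getElem (by rw [length_window, hw]) fun j h1 h2 => ?_
    simp [window_eq, hx, h2]
  rw [e, hq] at h
  rw [h]; congr 1; ring

/-! ### Positions in the image sequence -/

/-- The coordinate at which the output written while processing the letter `x i` starts. -/
noncomputable def startPos (L : Transducer n) (α : L.Q → ℤ) (k : ℕ) (x : FullShift n) (i : ℤ) :
    ℤ := i + α (forced L k x i)

section Positions

variable {L : Transducer n} {α : L.Q → ℤ} {k : ℕ}

/-- Consecutive output words are written on consecutive intervals. -/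
theorem startPos_succ (hα : Annotation L α) (hk : SyncAt L k) (x : FullShift n) (i : ℤ) :
    startPos L α k x (i + 1) = startPos L α k x i + (outAt L k x i).length := by
  have h := hα (forced L k x i) [x i]
  simp only [dsts, outs, List.append_nil, List.length_singleton] at h
  unfold startPos outAt
  rw [forced_succ L hk, h]
  push_cast; ring

theorem startPos_mono (hα : Annotation L α) (hk : SyncAt L k) (x : FullShift n) :
    Monotone (startPos L α k x) :=
  monotone_int_of_le_succ fun i => by rw [startPos_succ hα hk]; omega

theorem exists_lt_startPos (L : Transducer n) (α : L.Q → ℤ) (k : ℕ) (x : FullShift n)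
    (i m : ℤ) : ∃ s : ℕ, m < startPos L α k x (i + s) := by
  obtain ⟨B, hB⟩ := exists_bound L α
  refine ⟨(m - i + B + 1).toNat, ?_⟩
  have h := abs_le.1 (hB (forced L k x (i + (m - i + B + 1).toNat)))
  unfold startPos
  omega

theorem exists_startPos_le (L : Transducer n) (α : L.Q → ℤ) (k : ℕ) (x : FullShift n)
    (i m : ℤ) : ∃ s : ℕ, startPos L α k x (i - s) ≤ m := by
  obtain ⟨B, hB⟩ := exists_bound L α
  refine ⟨(i - m + B).toNat, ?_⟩
  have h := abs_le.1 (hB (forced L k x (i - (i - m + B).toNat)))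
  unfold startPos
  omega

theorem exists_index (x : FullShift n) (m : ℤ) (s : ℕ) (i : ℤ)
    (h1 : startPos L α k x i ≤ m) (h2 : m < startPos L α k x (i + s)) :
    ∃ t, t < i + s ∧ startPos L α k x t ≤ m ∧ m < startPos L α k x (t + 1) := by
  induction s with
  | zero => simp at h2; omega
  | succ s ih =>
    by_cases h : m < startPos L α k x (i + s)
    · obtain ⟨t, ht, h'⟩ := ih h
      exact ⟨t, by push_cast; omega, h'⟩
    · refine ⟨i + s, by push_cast; omega, by omega, ?_⟩
      have e : i + ((s + 1 : ℕ) : ℤ) = i + s + 1 := by push_cast; ring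
      rwa [e] at h2

/-- The induced map satisfies its defining specification. -/
theorem inducedMap_spec (hα : Annotation L α) (hk : SyncAt L k) (x : FullShift n) (i : ℤ)
    {j : ℕ} (hj : j < (outAt L k x i).length) :
    inducedMap L α k x (startPos L α k x i + j) = (outAt L k x i).getD j default := by
  have h : ∃ p : ℤ × ℕ, p.2 < (outAt L k x p.1).length ∧
      p.1 + α (forced L k x p.1) + (p.2 : ℤ) = startPos L α k x i + j := ⟨(i, j), hj, rfl⟩
  unfold inducedMap
  rw [dif_pos h]
  obtain ⟨h1, h2⟩ := h.choose_spec
  set p := h.choose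
  change startPos L α k x p.1 + (p.2 : ℤ) = _ at h2
  have s1 := startPos_succ hα hk x p.1
  have s2 := startPos_succ hα hk x i
  -- The intervals written for distinct indices are disjoint, so the index is `i`.
  have hp : p.1 = i := by
    rcases lt_trichotomy p.1 i with hlt | heq | hgt
    · have := startPos_mono hα hk x (show p.1 + 1 ≤ i from hlt)
      omega
    · exact heq
    · have := startPos_mono hα hk x (show i + 1 ≤ p.1 from hgt)
      omega
  have hp2 : p.2 = j := by rw [hp] at h2; omega
  rw [hp, hp2]

/-- From `startPos i` on, the image sequence is the output of the state forced at time `i`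
on the input `x i, x (i + 1), …`. -/
theorem inducedMap_eq_hmap (hα : Annotation L α) (hk : SyncAt L k) (x : FullShift n) (i : ℤ)
    (m : ℕ) : inducedMap L α k x (startPos L α k x i + m) =
      hmap L (forced L k x i) (fun j => x (i + j)) m := by
  obtain ⟨s, hs⟩ := exists_lt_startPos L α k x i (startPos L α k x i + m)
  induction s generalizing i m with
  | zero => simp at hs; omega
  | succ s ih =>
    have e : (fun j : ℕ => x (i + j)) = scons (x i) (fun j : ℕ => x (i + 1 + j)) := by
      rw [← scons_eta (fun j : ℕ => x (i + j))]
      congr 1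
      · simp
      · funext j; congr 1; push_cast; ring
    rw [e]
    by_cases hm : m < (outAt L k x i).length
    · rw [inducedMap_spec hα hk x i hm, hmap_scons_lt _ _ _ hm]; rfl
    · obtain ⟨d, rfl⟩ := Nat.exists_eq_add_of_le (not_lt.1 hm)
      have hp : startPos L α k x i + (((outAt L k x i).length + d : ℕ) : ℤ) =
          startPos L α k x (i + 1) + d := by
        rw [startPos_succ hα hk]; push_cast; ring
      rw [hp] at hs ⊢
      rw [ih (i + 1) d (by convert hs using 2; push_cast; ring), forced_succ L hk]
      exact (hmap_scons_ge hα _ _ _ _).symm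

/-- Coordinates before `startPos 0` only depend on the negative part of the input. -/
theorem inducedMap_congr_lt (hα : Annotation L α) (hk : SyncAt L k) {x x' : FullShift n}
    (h : ∀ j < 0, x j = x' j) {m : ℤ} (hm : m < startPos L α k x 0) :
    inducedMap L α k x m = inducedMap L α k x' m := by
  obtain ⟨s, hs⟩ := exists_startPos_le L α k x 0 m
  obtain ⟨t, ht, h1, h2⟩ := exists_index x m s _ hs (by simpa using hm)
  have ht0 : t < 0 := by omega
  have hf : forced L k x t = forced L k x' t :=
    forced_congr L k fun j hj => h j (by omega)
  have ho : outAt L k x t = outAt L k x' t := by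
    unfold outAt; rw [hf, h t ht0]
  have hp : startPos L α k x t = startPos L α k x' t := by
    unfold startPos; rw [hf]
  rw [startPos_succ hα hk] at h2
  obtain ⟨j, hj⟩ := Int.eq_ofNat_of_zero_le (sub_nonneg.2 h1)
  obtain rfl : m = startPos L α k x t + j := by omega
  have hl : j < (outAt L k x t).length := by omega
  rw [inducedMap_spec hα hk x t hl, hp, inducedMap_spec hα hk x' t (ho ▸ hl), ho]

/-- The sequence with the negative coordinates of `x` followed by `y`. -/
def glue (x : FullShift n) (y : ℕ → A n) : FullShift n :=
  fun j => if j < 0 then x j else y j.toNat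

theorem glue_neg (x : FullShift n) (y : ℕ → A n) : ∀ j < 0, x j = glue x y j :=
  fun j hj => by simp [glue, hj]

theorem inducedMap_glue (hα : Annotation L α) (hk : SyncAt L k) (x : FullShift n)
    (y : ℕ → A n) (m : ℕ) :
    inducedMap L α k (glue x y) (α (forced L k x 0) + m) = hmap L (forced L k x 0) y m := by
  have h := inducedMap_eq_hmap hα hk (glue x y) 0 m
  have e : (fun j : ℕ => glue x y (0 + j)) = y := by funext j; simp [glue]
  rw [e, startPos, zero_add, ← forced_congr L k (glue_neg x y)] at h
  exact h

/-- The annotation of a state `q` without incomplete response is determined by the induced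
map: if `x` forces `q` at time `0`, then `α q` is the first coordinate of the image which is
not determined by the negative coordinates of `x`. -/
theorem isLeast_annotation (hα : Annotation L α) (hk : SyncAt L k) (hn : NoIncomplete L)
    (x : FullShift n) :
    IsLeast {m : ℤ | ∃ x', (∀ j < 0, x j = x' j) ∧ inducedMap L α k x m ≠ inducedMap L α k x' m}
      (α (forced L k x 0)) := by
  constructor
  · obtain ⟨y, y', hy⟩ := hn (forced L k x 0)
    by_contra hcon
    simp only [Set.mem_ofPred_eq, not_exists, not_and, not_not] at hcon
    have h1 := inducedMap_glue hα hk x y 0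
    have h2 := inducedMap_glue hα hk x y' 0
    simp only [Nat.cast_zero, add_zero] at h1 h2
    rw [← hcon _ (glue_neg x y)] at h1
    rw [← hcon _ (glue_neg x y')] at h2
    exact hy (h1.symm.trans h2)
  · rintro m ⟨x', hx', hne⟩
    by_contra hm
    exact hne (inducedMap_congr_lt hα hk hx' (by simpa [startPos] using hm))

end Positions

/-! ### The degenerate transducers -/

theorem annotation_Zword (a : A n) : Annotation (Zword [a]) (fun _ => 0) := by
  intro q w
  have h : (outs (Zword [a]) w q).length = w.length := by
    induction w with
    | nil => rfl
    | cons b w ih =>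
      change ([a] ++ outs (Zword [a]) w q).length = _
      simp [ih]
  simp [h]

/-- In an annotated transducer with a single state every output is a single letter, so if the
output sequence does not depend on the input, it is constant. -/
theorem hmap_const {T : Transducer n} {α : T.Q → ℤ} (hα : Annotation T α) (q : T.Q)
    (hq : ∀ p, p = q) (hi : ∀ y y', hmap T q y = hmap T q y') (y : ℕ → A n) (m : ℕ) :
    hmap T q y m = hmap T q y 0 := by
  induction m with
  | zero => rfl
  | succ m ih =>
    have hl : (T.out (y 0) q).length = 1 := by
      have h := hα q [y 0]
      rw [hq (dsts T [y 0] q)] at h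
      simp [outs] at h
      omega
    have h := hmap_scons_ge hα q (y 0) (fun j => y (j + 1)) m
    rw [hl, scons_eta, hq (T.tr _ q), hi (fun j => y (j + 1)) y, ih, add_comm] at h
    exact h

theorem hmap_Zword_indep (x : Word n) (q : (Zword x).Q) (y y' : ℕ → A n) :
    hmap (Zword x) q y = hmap (Zword x) q y' := by
  have h : ∀ u v : Word n, u.length = v.length → outs (Zword x) u q = outs (Zword x) v q := by
    intro u
    induction u with
    | nil => intro v hv; rw [List.length_eq_zero_iff.1 hv.symm]
    | cons a u ih =>
      rintro (_ | ⟨b, v⟩) hv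
      · simp at hv
      · exact congrArg (x ++ ·) (ih v (by simpa using hv))
  have h' : ∀ r, outs (Zword x) ((List.range r).map y) q =
      outs (Zword x) ((List.range r).map y') q := fun r => h _ _ (by simp)
  funext m
  by_cases hm : ∃ r, m < (outs (Zword x) ((List.range r).map y) q).length
  · obtain ⟨r, hr⟩ := hm
    rw [hmap_eq _ q y hr, hmap_eq _ q y' (h' r ▸ hr), h']
  · have hm' : ¬ ∃ r, m < (outs (Zword x) ((List.range r).map y') q).length := by
      simpa only [h'] using hm
    unfold hmap
    rw [dif_neg hm, dif_neg hm']

theorem hmap_Zword_letter (a : A n) (q : (Zword [a]).Q) (y : ℕ → A n) (m : ℕ) :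
    hmap (Zword [a]) q y m = a := by
  rw [hmap_const (annotation_Zword a) q (fun _ => rfl) (hmap_Zword_indep _ q)]
  rw [hmap_eq (Zword [a]) q y (m := 0) (r := 1)] <;> simp [outs, Zword]

/-- An annotated transducer ω-equal to some `Z_x` is ω-equal to `Z_a` for a letter `a`. -/
theorem exists_letter {T : Transducer n} {α : T.Q → ℤ} (hα : Annotation T α) {x : Word n}
    (h : OmegaEq T (Zword x)) : ∃ a, OmegaEq T (Zword [a]) := by
  obtain ⟨f, hf⟩ := h
  have hs : ∀ p q : T.Q, p = q := fun p q => f.injective rfl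
  set q := Classical.choice T.ne
  have hi : ∀ y y', hmap T q y = hmap T q y' := fun y y' => by
    rw [hf]; exact hmap_Zword_indep x _ y y'
  refine ⟨hmap T q (fun _ => default) 0, f.trans (Equiv.refl PUnit), fun p => ?_⟩
  funext y m
  rw [hmap_Zword_letter, hs p q, hmap_const hα q (fun p => hs p q) hi, hi y]

theorem inducedMap_of_letter {T : Transducer n} {α : T.Q → ℤ} (hα : Annotation T α) {k : ℕ}
    (hk : SyncAt T k) {a : A n} (h : OmegaEq T (Zword [a])) (x : FullShift n) (m : ℤ) :
    inducedMap T α k x m = a := by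
  obtain ⟨f, hf⟩ := h
  obtain ⟨s, hs⟩ := exists_startPos_le T α k x 0 m
  obtain ⟨j, hj⟩ := Int.eq_ofNat_of_zero_le (sub_nonneg.2 hs)
  obtain rfl : m = startPos T α k x (0 - s) + j := by omega
  rw [inducedMap_eq_hmap hα hk, hf, hmap_Zword_letter]

/-- The map induced by a transducer without incomplete response is not constant. -/
theorem not_const {T : Transducer n} {α : T.Q → ℤ} (hα : Annotation T α) {k : ℕ}
    (hk : SyncAt T k) (hn : NoIncomplete T) (a : A n)
    (h : ∀ x m, inducedMap T α k x m = a) : False := by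
  obtain ⟨x', -, hx⟩ := (isLeast_annotation hα hk hn fun _ => default).1
  exact hx (by rw [h, h])

/-! ### Comparing two transducers -/

/-- Without incomplete response, `|λ(a, q)|` is the first output coordinate on inputs starting
with `a` that is not determined by `a`. -/
theorem isLeast_out {T : Transducer n} {α : T.Q → ℤ} (hα : Annotation T α)
    (hn : NoIncomplete T) (q : T.Q) (a : A n) :
    IsLeast {m : ℕ | ∃ y y', hmap T q (scons a y) m ≠ hmap T q (scons a y') m}
      (T.out a q).length := by
  constructor
  · obtain ⟨y, y', h⟩ := hn (T.tr a q)
    refine ⟨y, y', ?_⟩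
    rw [← hmap_scons_ge hα q a y 0, ← hmap_scons_ge hα q a y' 0] at h
    exact h
  · rintro m ⟨y, y', h⟩
    by_contra hm
    exact h (by rw [hmap_scons_lt q a y (not_le.1 hm), hmap_scons_lt q a y' (not_le.1 hm)])

/-- Without incomplete response, ω-equivalence of states is preserved by transitions. -/
theorem hmap_tr_eq {T U : Transducer n} {α : T.Q → ℤ} {β : U.Q → ℤ} (hα : Annotation T α)
    (hβ : Annotation U β) (hT : NoIncomplete T) (hU : NoIncomplete U) {q : T.Q} {p : U.Q}
    (h : hmap T q = hmap U p) (a : A n) : hmap T (T.tr a q) = hmap U (U.tr a p) := by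
  have h1 := isLeast_out hα hT q a
  rw [h] at h1
  have e := h1.unique (isLeast_out hβ hU p a)
  funext y m
  rw [← hmap_scons_ge hα q a y m, ← hmap_scons_ge hβ p a y m, h, e]

theorem inducedMap_eq_of_equiv {L M : Transducer n} {α : L.Q → ℤ} {β : M.Q → ℤ}
    (hα : Annotation L α) (hβ : Annotation M β) {k k' : ℕ} (hk : SyncAt L k)
    (hk' : SyncAt M k') (hL : NoIncomplete L) (hw : WeaklyMinimal L) (f : L.Q ≃ M.Q)
    (hf : ∀ q, hmap L q = hmap M (f q)) (hfα : ∀ q, β (f q) = α q) :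
    inducedMap L α k = inducedMap M β k' := by
  have hM : NoIncomplete M := fun p => by
    obtain ⟨y, y', h⟩ := hL (f.symm p)
    rw [hf, f.apply_symm_apply] at h
    exact ⟨y, y', h⟩
  have htr : ∀ a q, f (L.tr a q) = M.tr a (f q) := fun a q => by
    refine f.eq_symm_apply.1 (hw _ _ ?_)
    rw [hf (f.symm _), f.apply_symm_apply, ← hmap_tr_eq hα hβ hL hM (hf q) a]
  have hd : ∀ w q, f (dsts L w q) = dsts M w (f q) := by
    intro w
    induction w with
    | nil => intro q; rfl
    | cons a w ih => intro q; simp only [dsts, ih, htr]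
  have hforced : ∀ x i, forced M k' x i = f (forced L k x i) := fun x i => by
    have h := dsts_window_forced L hk x (i - k') k'
    rw [sub_add_cancel] at h
    rw [← h, hd, forced_dsts M hk']
  funext x m
  obtain ⟨s, hs⟩ := exists_startPos_le L α k x 0 m
  obtain ⟨j, hj⟩ := Int.eq_ofNat_of_zero_le (sub_nonneg.2 hs)
  obtain rfl : m = startPos L α k x (0 - s) + j := by omega
  have hp : startPos L α k x (0 - s) = startPos M β k' x (0 - s) := by
    unfold startPos; rw [hforced, hfα]
  rw [inducedMap_eq_hmap hα hk, hp, inducedMap_eq_hmap hβ hk', hforced, hf]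

/-- If the induced maps agree, the states forced by a common sequence are ω-equivalent and
have the same annotation. -/
theorem forced_match {L M : Transducer n} {α : L.Q → ℤ} {β : M.Q → ℤ}
    (hα : Annotation L α) (hβ : Annotation M β) {k k' : ℕ} (hk : SyncAt L k)
    (hk' : SyncAt M k') (hL : NoIncomplete L) (hM : NoIncomplete M)
    (h : inducedMap L α k = inducedMap M β k') (x : FullShift n) :
    hmap L (forced L k x 0) = hmap M (forced M k' x 0) ∧
      β (forced M k' x 0) = α (forced L k x 0) := by
  have h1 := isLeast_annotation hα hk hL x
  rw [h] at h1
  have e := h1.unique (isLeast_annotation hβ hk' hM x)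
  refine ⟨?_, e.symm⟩
  funext y m
  rw [← inducedMap_glue hα hk, h, e, inducedMap_glue hβ hk']

theorem exists_equiv {L M : Transducer n} {α : L.Q → ℤ} {β : M.Q → ℤ}
    (hα : Annotation L α) (hβ : Annotation M β) {k k' : ℕ} (hk : SyncAt L k)
    (hk' : SyncAt M k') (hcL : IsCore L) (hcM : IsCore M) (hL : NoIncomplete L)
    (hM : NoIncomplete M) (hwL : WeaklyMinimal L) (hwM : WeaklyMinimal M)
    (h : inducedMap L α k = inducedMap M β k') :
    ∃ f : L.Q ≃ M.Q, (∀ q, hmap L q = hmap M (f q)) ∧ ∀ q, β (f q) = α q := by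
  have key := forced_match hα hβ hk hk' hL hM h
  have hex : ∀ q, ∃ p, hmap L q = hmap M p ∧ β p = α q := fun q => by
    obtain ⟨x, rfl⟩ := exists_forced L hcL hk q
    exact ⟨_, key x⟩
  choose f hf hfα using hex
  refine ⟨Equiv.ofBijective f ⟨fun q q' e => hwL _ _ ?_, fun p => ?_⟩, hf, hfα⟩
  · rw [hf, hf q', e]
  · obtain ⟨x, rfl⟩ := exists_forced M hcM hk' p
    exact ⟨forced L k x 0, hwM _ _ (by rw [← hf, (key x).1])⟩

/-- Let `L, M ∈ SL_n` with annotations `α` and `β` respectively.  Then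
the induced maps `(L, α)` and `(M, β)` on `X_n^ℤ` are equal if and only if either `L = M`
(as elements of `SL_n`, i.e. there is an ω-equality bijection of the states) and `α = β`
(under this bijection), or `L` and `M` are both equal to `Z_a` for some letter `a`. -/
theorem inducedMap_eq_iff (n : ℕ) (L M : Transducer n) (hL : SLnMem L) (hM : SLnMem M)
    (α : L.Q → ℤ) (β : M.Q → ℤ) (hα : Annotation L α) (hβ : Annotation M β)
    (k k' : ℕ) (hk : SyncAt L k) (hk' : SyncAt M k') :
    inducedMap L α k = inducedMap M β k' ↔
      ((∃ f : L.Q ≃ M.Q, (∀ q, hmap L q = hmap M (f q)) ∧ ∀ q, β (f q) = α q) ∨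
        ∃ a : A n, OmegaEq L (Zword [a]) ∧ OmegaEq M (Zword [a])) := by
  have hL' : (NoIncomplete L ∧ WeaklyMinimal L) ∨ ∃ a, OmegaEq L (Zword [a]) :=
    hL.1.2.2.2.imp id fun ⟨_, _, _, h⟩ => exists_letter hα h
  have hM' : (NoIncomplete M ∧ WeaklyMinimal M) ∨ ∃ a, OmegaEq M (Zword [a]) :=
    hM.1.2.2.2.imp id fun ⟨_, _, _, h⟩ => exists_letter hβ h
  constructor
  · intro h
    rcases hL' with ⟨hnL, hwL⟩ | ⟨a, ha⟩ <;> rcases hM' with ⟨hnM, hwM⟩ | ⟨b, hb⟩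
    · exact Or.inl (exists_equiv hα hβ hk hk' hL.1.2.2.1 hM.1.2.2.1 hnL hnM hwL hwM h)
    · exact (not_const hα hk hnL b fun x m => by rw [h, inducedMap_of_letter hβ hk' hb]).elim
    · exact (not_const hβ hk' hnM a fun x m => by
        rw [← h, inducedMap_of_letter hα hk ha]).elim
    · have e : a = b := by
        rw [← inducedMap_of_letter hα hk ha (fun _ => default) 0, h,
          inducedMap_of_letter hβ hk' hb]
      exact Or.inr ⟨a, ha, e ▸ hb⟩
  · have letter : ∀ a, OmegaEq L (Zword [a]) → OmegaEq M (Zword [a]) →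
        inducedMap L α k = inducedMap M β k' := fun a ha hb => by
      funext x m
      rw [inducedMap_of_letter hα hk ha, inducedMap_of_letter hβ hk' hb]
    rintro (⟨f, hf, hfα⟩ | ⟨a, ha, hb⟩)
    · rcases hL' with ⟨hnL, hwL⟩ | ⟨a, g, hg⟩
      · exact inducedMap_eq_of_equiv hα hβ hk hk' hnL hwL f hf hfα
      · refine letter a ⟨g, hg⟩ ⟨f.symm.trans g, fun p => ?_⟩
        rw [Equiv.trans_apply, ← hg, hf, f.apply_symm_apply]
    · exact letter a ha hb

end ShiftPaper
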